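/- Assume q < |a_1⋯a_{n+1} b_1⋯b_{n+1}|, and let x, y ∈ (ℂ^*)ⁿ both satisfy the nondegeneracy conditions: x_i/x_j ∉ qᶻ for 1 ≤ i < j ≤ n, and x_i · (x_1⋯x_n) · d⁻¹ ∉ qᶻ for 1 ≤ i ≤ n (and the same with y in place of x). Then the regularized Gustafson sum is independent of the base point: 𝒦(x) = 𝒦(y). (Lemma 5.1 of the paper: 𝒦 is a constant.) -/

import Mathlib

/-!
Put `N = n + 1`, let `X` be the point `x` completed by the coordinate `d / ∏ x_k`, and let
`Θ(z) = ∏_{i<j} z_j θ(z_i/z_j)` with `θ(u) = (u)_∞ (q/u)_∞`. Since `Θ` is the Vandermonde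
determinant times the denominator of the summand, its quasi-periodicity shows that the summand at
`ν` is `Θ(X)⁻¹` times the determinant with rows `(t_k(X_i, ν_i))_k` (`t_k` is `latTerm`), where `ν`
is completed to a vector of total degree `∑ ν_i = 0`.

That restriction is encoded by an auxiliary variable `w`. Summing over all of `ℤ^N` with weight
`w^{∑ ν_i}` gives `D(X; w) = det (f_k(X_i))`, where `f_k(x) = ∑_m w^m t_k(x, m)`; the original sum
is the constant term of `D(X; w)` in `w`. The series converge for `|q| / |∏ a_i| < |w| < |∏ b_i|`,
an annulus which is nonempty precisely because of the hypothesis on `∏ a_i ∏ b_i`, and each `f_k`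
is holomorphic on `ℂ^*` with `f(qx) = w⁻¹ x^{-N} f(x)`.

Such functions are rigid: if `N` points `p_i`, distinct modulo `q^ℤ`, are zeros of one of them and
`w ∏ (-p_i)` is not a power of `q`, then it vanishes identically, because division by
`∏ θ(x/p_i)` reduces this to Liouville's theorem. Applied to one variable at a time, this shows that
`D(X; w)` is proportional to `Θ(X) θ(w ∏ (-X_i))`. For two points with the same product of
coordinates `d` the last factor cancels, so `D(X; w) Θ(Y) = D(Y; w) Θ(X)` on a circle `|w| = r`
which avoids the zeros of that factor. Comparing constant terms gives the equality of the two sums.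
-/

open scoped BigOperators
open Finset

/-- The infinite q-Pochhammer symbol `(a)_∞ = ∏_{i=0}^∞ (1 - qⁱ a)`. -/
noncomputable def qp (q a : ℂ) : ℂ := ∏' i : ℕ, (1 - q ^ i * a)

/-- The point `z = (x₁qᵛ¹,…,x_nqᵛⁿ, d z₁⁻¹⋯z_n⁻¹)` of the Gustafson lattice. -/
noncomputable def gz {n : ℕ} (q d : ℂ) (x : Fin n → ℂ) (ν : Fin n → ℤ) : Fin (n + 1) → ℂ :=
  Fin.snoc (fun k => x k * q ^ ν k) (d * (∏ k, x k * q ^ ν k)⁻¹)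

/-- Summand of the regularized Jackson integral of Gustafson's `A_n` type. -/
noncomputable def gRegTerm {n : ℕ} (q d : ℂ) (a b : Fin (n + 1) → ℂ) (x : Fin n → ℂ)
    (ν : Fin n → ℤ) : ℂ :=
  (∏ i, ∏ j, qp q (q * (a j)⁻¹ * gz q d x ν i) * qp q (q * (b j)⁻¹ * (gz q d x ν i)⁻¹)) /
    ∏ i, ∏ j ∈ Finset.Ioi i, qp q (q * gz q d x ν i / gz q d x ν j) *
      qp q (q * gz q d x ν j / gz q d x ν i)

/-- The regularized Jackson integral of Gustafson's `A_n` type `𝒦(x)`. -/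
noncomputable def gReg {n : ℕ} (q d : ℂ) (a b : Fin (n + 1) → ℂ) (x : Fin n → ℂ) : ℂ :=
  (1 - q) ^ n * ∑' ν : Fin n → ℤ, gRegTerm q d a b x ν

/-! ### The infinite q-Pochhammer symbol and the theta function -/

section Theta

variable {q : ℂ}

lemma summable_norm_neg_pow_mul (hq : ‖q‖ < 1) (a : ℂ) : Summable fun i : ℕ => ‖-(q ^ i * a)‖ := by
  simpa using (summable_geometric_of_lt_one (norm_nonneg q) hq).mul_right ‖a‖

lemma multipliable_qp (hq : ‖q‖ < 1) (a : ℂ) : Multipliable fun i : ℕ => 1 - q ^ i * a := by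
  simpa [sub_eq_add_neg] using multipliable_one_add_of_summable (summable_norm_neg_pow_mul hq a)

lemma differentiable_qp (hq : ‖q‖ < 1) : Differentiable ℂ (qp q) := by
  have qp_eq : qp q = fun a => ∏' i : ℕ, (1 + -(q ^ i * a)) := by
    funext a
    simp only [qp, sub_eq_add_neg]
  intro a
  have hball : DifferentiableOn ℂ (qp q) (Metric.ball 0 (‖a‖ + 1)) := by
    rw [qp_eq]
    refine (Summable.hasProdLocallyUniformlyOn_nat_one_add (f := fun i z => -(q ^ i * z))
      (u := fun i => ‖q‖ ^ i * (‖a‖ + 1)) Metric.isOpen_ball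
      ((summable_geometric_of_lt_one (norm_nonneg q) hq).mul_right _)
      (.of_forall fun i z hz => ?_) (fun i => by fun_prop)).differentiableOn
      (.of_forall fun _ => by
        simpa [Finset.prod_fn] using DifferentiableOn.finsetProd (fun _ _ => by fun_prop))
      Metric.isOpen_ball
    rw [mem_ball_zero_iff] at hz
    rw [norm_neg, norm_mul, norm_pow]
    gcongr
  exact hball.differentiableAt (Metric.isOpen_ball.mem_nhds (by simp))

lemma qp_eq_one_sub_mul (hq : ‖q‖ < 1) (a : ℂ) : qp q a = (1 - a) * qp q (q * a) := by
  unfold qp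
  rw [tprod_eq_zero_mul']
  · simp [pow_succ, mul_assoc]
  · simpa [pow_succ, mul_assoc] using multipliable_qp hq (q * a)

lemma qp_ne_zero (hq : ‖q‖ < 1) {a : ℂ} (h : ∀ i : ℕ, q ^ i * a ≠ 1) : qp q a ≠ 0 := by
  have := tprod_one_add_ne_zero_of_summable (f := fun i : ℕ => -(q ^ i * a))
    (fun i => by rw [← sub_eq_add_neg, sub_ne_zero]; exact (h i).symm)
    (summable_norm_neg_pow_mul hq a)
  simpa only [qp, sub_eq_add_neg] using this

lemma qp_self_ne_zero (hq : ‖q‖ < 1) : qp q q ≠ 0 := qp_ne_zero hq fun i hi => by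
  have : ‖q‖ ^ (i + 1) = 1 := by rw [← norm_pow, pow_succ, hi, norm_one]
  exact (pow_lt_one₀ (norm_nonneg q) hq i.succ_ne_zero).ne this

/-- The multiplicative theta function `θ(u) = (u)_∞ (q/u)_∞`. -/
noncomputable def qtheta (q u : ℂ) : ℂ := qp q u * qp q (q / u)

lemma qtheta_eq_one_sub_mul (hq : ‖q‖ < 1) (u : ℂ) :
    qtheta q u = (1 - u) * (qp q (q * u) * qp q (q / u)) := by
  rw [qtheta, qp_eq_one_sub_mul hq u, mul_assoc]

lemma qtheta_one (hq : ‖q‖ < 1) : qtheta q 1 = 0 := by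
  rw [qtheta_eq_one_sub_mul hq, sub_self, zero_mul]

lemma qtheta_mul_q (hq0 : q ≠ 0) (hq : ‖q‖ < 1) {u : ℂ} (hu : u ≠ 0) :
    qtheta q (q * u) = -u⁻¹ * qtheta q u := by
  rw [qtheta_eq_one_sub_mul hq u, qtheta, show q / (q * u) = u⁻¹ by field_simp,
    qp_eq_one_sub_mul hq u⁻¹, ← div_eq_mul_inv q u]
  field_simp
  ring

/-- The Gaussian weight `q^{m(m-1)/2} xᵐ`, the automorphy factor of theta functions. -/
noncomputable def gaussian (q x : ℂ) (m : ℤ) : ℂ := q ^ Ring.choose m 2 * x ^ m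

@[simp]
lemma gaussian_zero (q x : ℂ) : gaussian q x 0 = 1 := by
  simp [gaussian, Ring.choose_zero_pos ℤ two_pos]

@[simp]
lemma gaussian_one (q x : ℂ) : gaussian q x 1 = x := by
  simpa [gaussian, Nat.choose] using congrArg (q ^ · * x) (Ring.choose_natCast (R := ℤ) 1 2)

lemma gaussian_ne_zero (hq0 : q ≠ 0) {x : ℂ} (hx : x ≠ 0) (m : ℤ) : gaussian q x m ≠ 0 :=
  mul_ne_zero (zpow_ne_zero _ hq0) (zpow_ne_zero _ hx)

lemma gaussian_mul (q x y : ℂ) (m : ℤ) : gaussian q (x * y) m = gaussian q x m * y ^ m := by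
  rw [gaussian, gaussian, mul_zpow, mul_assoc]

lemma two_mul_choose_two (m : ℤ) : 2 * Ring.choose m 2 = m * (m - 1) := by
  have := Ring.descPochhammer_eq_factorial_smul_choose m 2
  simpa [descPochhammer, ← sq, Polynomial.smeval_comp, Polynomial.smeval_sub,
    Polynomial.smeval_X_pow, mul_sub, sub_mul] using this.symm

lemma choose_add_two (m n : ℤ) :
    Ring.choose (m + n) 2 = Ring.choose m 2 + m * n + Ring.choose n 2 := by
  linarith [two_mul_choose_two m, two_mul_choose_two n, two_mul_choose_two (m + n)]

lemma gaussian_add (hq0 : q ≠ 0) {x : ℂ} (hx : x ≠ 0) (m n : ℤ) :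
    gaussian q x (m + n) = gaussian q x m * gaussian q x n * q ^ (m * n) := by
  rw [gaussian, gaussian, gaussian, choose_add_two, zpow_add₀ hq0, zpow_add₀ hq0, zpow_add₀ hx]
  ring

lemma gaussian_add_one (hq0 : q ≠ 0) {x : ℂ} (hx : x ≠ 0) (m : ℤ) :
    gaussian q x (m + 1) = x * q ^ m * gaussian q x m := by
  rw [gaussian_add hq0 hx, gaussian_one, mul_one]
  ring

lemma gaussian_mul_qtheta (hq0 : q ≠ 0) (hq : ‖q‖ < 1) {u : ℂ} (hu : u ≠ 0) (m : ℤ) :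
    gaussian q (-u) m * qtheta q (u * q ^ m) = qtheta q u := by
  have step (m : ℤ) : gaussian q (-u) (m + 1) * qtheta q (u * q ^ (m + 1)) =
      gaussian q (-u) m * qtheta q (u * q ^ m) := by
    have hum : u * q ^ m ≠ 0 := mul_ne_zero hu (zpow_ne_zero m hq0)
    rw [gaussian_add_one hq0 (neg_ne_zero.2 hu), zpow_add_one₀ hq0, ← mul_assoc, mul_comm _ q,
      qtheta_mul_q hq0 hq hum]
    field_simp
  induction m with
  | zero => simp
  | succ m ih => rw [step, ih]
  | pred m ih => rw [← step, sub_add_cancel, ih]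

lemma qtheta_zpow (hq0 : q ≠ 0) (hq : ‖q‖ < 1) (m : ℤ) : qtheta q (q ^ m) = 0 := by
  have := gaussian_mul_qtheta hq0 hq one_ne_zero m
  rw [one_mul, qtheta_one hq] at this
  exact (mul_eq_zero.1 this).resolve_left (gaussian_ne_zero hq0 (by norm_num) m)

lemma qtheta_eq_zero_iff (hq0 : q ≠ 0) (hq : ‖q‖ < 1) {u : ℂ} (hu : u ≠ 0) :
    qtheta q u = 0 ↔ ∃ m : ℤ, u = q ^ m := by
  refine ⟨fun h => ?_, fun ⟨m, hm⟩ => hm ▸ qtheta_zpow hq0 hq m⟩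
  contrapose! h
  refine mul_ne_zero (qp_ne_zero hq fun i hi => h (-i) ?_) (qp_ne_zero hq fun i hi => h (i + 1) ?_)
  · rw [zpow_neg, zpow_natCast]
    exact eq_inv_of_mul_eq_one_right hi
  · rw [← Nat.cast_succ, zpow_natCast, pow_succ]
    field_simp at hi
    exact hi.symm

lemma qtheta_neg_one_ne_zero (hq0 : q ≠ 0) (hq : ‖q‖ < 1) : qtheta q (-1) ≠ 0 := fun h => by
  obtain ⟨m, hm⟩ := (qtheta_eq_zero_iff hq0 hq (by norm_num)).1 h
  have hnorm := congrArg norm hm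
  rw [norm_neg, norm_one, norm_zpow, eq_comm,
    zpow_eq_one_iff_right₀ (norm_nonneg q) hq.ne] at hnorm
  norm_num [hnorm] at hm

lemma differentiableAt_qtheta (hq : ‖q‖ < 1) {u : ℂ} (hu : u ≠ 0) :
    DifferentiableAt ℂ (qtheta q) u :=
  (differentiable_qp hq u).mul
    ((differentiable_qp hq _).comp u (by fun_prop (disch := exact hu)))

lemma deriv_qtheta_one (hq : ‖q‖ < 1) : deriv (qtheta q) 1 = -(qp q q) ^ 2 := by
  have hcofactor : DifferentiableAt ℂ (fun u => qp q (q * u) * qp q (q / u)) 1 :=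
    ((differentiable_qp hq _).comp (1 : ℂ) (by fun_prop)).mul
      ((differentiable_qp hq _).comp (1 : ℂ) (by fun_prop (disch := norm_num)))
  have hderiv := ((hasDerivAt_id' (1 : ℂ)).const_sub 1).fun_mul hcofactor.hasDerivAt
  rw [funext (qtheta_eq_one_sub_mul hq), hderiv.deriv]
  simp [sq]

lemma deriv_qtheta_zpow_ne_zero (hq0 : q ≠ 0) (hq : ‖q‖ < 1) (m : ℤ) :
    deriv (qtheta q) (q ^ m) ≠ 0 := by
  intro h0
  have hm : q ^ m ≠ 0 := zpow_ne_zero m hq0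
  have hgauss : DifferentiableAt ℂ (fun u => gaussian q (-u) m) 1 := by
    unfold gaussian
    exact (DifferentiableAt.zpow (by fun_prop) (Or.inl (by norm_num))).const_mul _
  have htheta : HasDerivAt (fun u => qtheta q (u * q ^ m)) (0 * (1 * q ^ m)) 1 := by
    refine HasDerivAt.comp (h₂ := qtheta q) (1 : ℂ) ?_ ((hasDerivAt_id' (1 : ℂ)).mul_const _)
    rw [one_mul, ← h0]
    exact (differentiableAt_qtheta hq hm).hasDerivAt
  have hzero : deriv (qtheta q) 1 = 0 := by
    refine (((hgauss.hasDerivAt.mul htheta).congr_of_eventuallyEq ?_).deriv).trans ?_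
    · filter_upwards [isOpen_ne.mem_nhds one_ne_zero] with u hu
      exact (gaussian_mul_qtheta hq0 hq hu m).symm
    · rw [one_mul, qtheta_zpow hq0 hq]
      ring
  rw [deriv_qtheta_one hq, neg_eq_zero] at hzero
  exact pow_ne_zero 2 (qp_self_ne_zero hq) hzero

end Theta

/-! ### Holomorphic theta functions on the punctured plane -/

section ThetaSpace

open Filter Topology

variable {q c : ℂ} {N : ℕ} {f g : ℂ → ℂ}

lemma exists_holomorphic_quotient {U : Set ℂ} (hU : IsOpen U) {t : ℂ → ℂ}
    (hf : DifferentiableOn ℂ f U) (ht : DifferentiableOn ℂ t U)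
    (hzero : ∀ p ∈ U, t p = 0 → f p = 0 ∧ deriv t p ≠ 0) :
    ∃ g : ℂ → ℂ, DifferentiableOn ℂ g U ∧ ∀ x ∈ U, f x = t x * g x := by
  refine ⟨fun x => if t x = 0 then deriv f x / deriv t x else f x / t x, fun p hp => ?_,
    fun x hx => ?_⟩
  · have hpU := hU.mem_nhds hp
    have htp := ht.differentiableAt hpU
    refine DifferentiableAt.differentiableWithinAt ?_
    by_cases h0 : t p = 0
    · obtain ⟨hf0, hderiv⟩ := hzero p hp h0
      -- Near `p` the required function is the quotient of the difference quotients at `p`.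
      have hf_slope : DifferentiableAt ℂ (dslope f p) p :=
        ((Complex.differentiableOn_dslope hpU).2 hf).differentiableAt hpU
      have ht_slope : DifferentiableAt ℂ (dslope t p) p :=
        ((Complex.differentiableOn_dslope hpU).2 ht).differentiableAt hpU
      refine (hf_slope.div ht_slope (by rwa [dslope_same])).congr_of_eventuallyEq ?_
      have ht_ne : ∀ᶠ x in 𝓝[≠] p, t x ≠ 0 := htp.hasDerivAt.eventually_ne hderiv
      filter_upwards [eventually_nhdsWithin_iff.1 ht_ne] with x hx
      rcases eq_or_ne x p with rfl | hxp
      · simp [h0, dslope_same]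
      · have hsub : x - p ≠ 0 := sub_ne_zero.2 hxp
        simp only [hx hxp, if_false, Pi.div_apply, dslope_of_ne _ hxp, slope_def_field, hf0, h0,
          sub_zero]
        field_simp
    · refine ((hf.differentiableAt hpU).div htp h0).congr_of_eventuallyEq ?_
      filter_upwards [htp.continuousAt.eventually_ne h0] with x hx
      simp [hx]
  · by_cases h0 : t x = 0
    · simp [h0, (hzero x hx h0).1]
    · simp only [h0, if_false]
      field_simp

lemma eq_zero_or_eq_zero_of_mul_eq_zero_of_punctured (hf : DifferentiableOn ℂ f {0}ᶜ)
    (hg : DifferentiableOn ℂ g {0}ᶜ) (hfg : ∀ x, x ≠ 0 → f x * g x = 0) :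
    (∀ x, x ≠ 0 → f x = 0) ∨ ∀ x, x ≠ 0 → g x = 0 :=
  AnalyticOnNhd.eq_zero_or_eq_zero_of_mul_eq_zero (hf.analyticOnNhd isOpen_compl_singleton)
    (hg.analyticOnNhd isOpen_compl_singleton) hfg
    (isConnected_compl_singleton_of_one_lt_rank (by simp) 0).isPreconnected

lemma exists_bound_of_mul_invariant (hq0 : q ≠ 0) (hq : ‖q‖ < 1) {u : ℂ → ℝ}
    (hu : ContinuousOn u {0}ᶜ) (hinv : ∀ x, x ≠ 0 → u (q * x) = u x) :
    ∃ M, ∀ x, x ≠ 0 → ‖u x‖ ≤ M := by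
  have hqn : 0 < ‖q‖ := norm_pos_iff.2 hq0
  have hzpow (m : ℤ) {x : ℂ} (hx : x ≠ 0) : u (q ^ m * x) = u x := by
    induction m with
    | zero => simp
    | succ m ih =>
      rw [zpow_add_one₀ hq0, mul_comm _ q, mul_assoc, hinv _ (by positivity), ih]
    | pred m ih =>
      rw [← hinv _ (by positivity), ← mul_assoc, ← zpow_one_add₀ hq0, add_sub_cancel, ih]
  have hcompact : IsCompact (Metric.closedBall (0 : ℂ) ‖q‖⁻¹ \ Metric.ball 0 1) :=
    (isCompact_closedBall _ _).diff Metric.isOpen_ball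
  obtain ⟨M, hM⟩ := hcompact.exists_bound_of_continuousOn (f := u) <| hu.mono fun y hy => by
    rintro rfl
    simp at hy
  refine ⟨M, fun x hx => ?_⟩
  obtain ⟨m, hm, hm'⟩ := exists_mem_Ico_zpow (norm_pos_iff.2 hx) ((one_lt_inv₀ hqn).2 hq)
  rw [← hzpow m hx]
  rw [inv_zpow] at hm hm'
  refine hM _ ⟨?_, ?_⟩
  · rw [mem_closedBall_zero_iff, norm_mul, norm_zpow]
    rw [zpow_add_one₀ hqn.ne', mul_inv, ← div_eq_inv_mul, lt_div_iff₀' (by positivity)] at hm'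
    exact hm'.le
  · rw [mem_ball_zero_iff, not_lt, norm_mul, norm_zpow]
    rwa [inv_le_iff_one_le_mul₀' (by positivity)] at hm

/-- The space of theta functions of degree `N` with multiplier `c`: functions holomorphic on `ℂ^*`
with `f(qx) = c x⁻ᴺ f(x)`. Values at `0` are irrelevant. -/
def thetaSpace (q c : ℂ) (N : ℕ) : Submodule ℂ (ℂ → ℂ) where
  carrier := {f | DifferentiableOn ℂ f {0}ᶜ ∧ ∀ x, x ≠ 0 → x ^ N * f (q * x) = c * f x}
  zero_mem' := ⟨differentiableOn_const 0, by simp⟩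
  add_mem' hf hg := ⟨hf.1.add hg.1, fun x hx => by
    simp only [Pi.add_apply, mul_add, hf.2 x hx, hg.2 x hx]⟩
  smul_mem' r f hf := ⟨hf.1.const_smul r, fun x hx => by
    simp only [Pi.smul_apply, smul_eq_mul, mul_left_comm _ r, hf.2 x hx]⟩

lemma apply_mul_zpow_eq_zero (hq0 : q ≠ 0) (hc : c ≠ 0) (hf : f ∈ thetaSpace q c N) {x : ℂ}
    (hx : x ≠ 0) (hfx : f x = 0) (m : ℤ) : f (x * q ^ m) = 0 := by
  have step {y : ℂ} (hy : y ≠ 0) : f (q * y) = 0 ↔ f y = 0 := by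
    rw [← mul_eq_zero_iff_left (pow_ne_zero N hy), hf.2 y hy, mul_eq_zero_iff_left hc]
  have hxm (m : ℤ) : x * q ^ m ≠ 0 := mul_ne_zero hx (zpow_ne_zero m hq0)
  induction m with
  | zero => simpa using hfx
  | succ m ih => rwa [zpow_add_one₀ hq0, ← mul_assoc, mul_comm _ q, step (hxm _)]
  | pred m ih =>
    rwa [← step (hxm _), mul_left_comm, ← zpow_one_add₀ hq0, add_sub_cancel]

/-- With `α = log ‖c‖ / log ‖q‖` the function `‖f(x)‖ ‖x‖^(-α)` is `q`-invariant, hence bounded,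
so Liouville's theorem applies to the entire function `f(eᵗ) e^(-αt)`. -/
lemma exists_apply_mul_exp_of_mem_thetaSpace_zero (hq0 : q ≠ 0) (hq : ‖q‖ < 1) (hc : c ≠ 0)
    (hf : f ∈ thetaSpace q c 0) :
    ∃ α : ℝ, ∀ x, x ≠ 0 → ∀ t : ℂ, f (x * Complex.exp t) = Complex.exp (α * t) * f x := by
  have hqn : 0 < ‖q‖ := norm_pos_iff.2 hq0
  set α : ℝ := Real.logb ‖q‖ ‖c‖
  have hqα : ‖q‖ ^ α = ‖c‖ := Real.rpow_logb hqn hq.ne (norm_pos_iff.2 hc)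
  obtain ⟨M, hM⟩ := exists_bound_of_mul_invariant hq0 hq (u := fun y => ‖f y‖ * ‖y‖ ^ (-α))
    (hf.1.continuousOn.norm.mul fun y hy => (continuous_norm.continuousAt.rpow_const
      (Or.inl (norm_ne_zero_iff.2 hy))).continuousWithinAt) fun y hy => by
      have hfq : f (q * y) = c * f y := by simpa using hf.2 y hy
      rw [hfq, norm_mul, norm_mul, Real.mul_rpow hqn.le (norm_nonneg y), Real.rpow_neg hqn.le, hqα]
      field_simp
  set h : ℂ → ℂ := fun s => f (Complex.exp s) * Complex.exp (-α * s) with hh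
  have hdiff : Differentiable ℂ h := fun s =>
    ((hf.1.differentiableAt (isOpen_compl_singleton.mem_nhds (Complex.exp_ne_zero s))).comp s
      Complex.differentiableAt_exp).mul (by fun_prop)
  have hbdd : Bornology.IsBounded (Set.range h) := by
    refine isBounded_iff_forall_norm_le.2 ⟨M, ?_⟩
    rintro _ ⟨s, rfl⟩
    refine (le_of_eq ?_).trans ((Real.le_norm_self _).trans (hM _ (Complex.exp_ne_zero s)))
    rw [hh, norm_mul, Complex.norm_exp (_ * s), Complex.norm_exp, ← Real.exp_mul]
    simp [mul_comm]
  refine ⟨α, fun x hx t => ?_⟩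
  have hconst := hdiff.apply_eq_apply_of_bounded hbdd (Complex.log x + t) (Complex.log x)
  simp only [hh, mul_add, Complex.exp_add, Complex.exp_log hx] at hconst
  rw [neg_mul, neg_mul, Complex.exp_neg (α * t)] at hconst
  have hexp := Complex.exp_ne_zero (α * t)
  field_simp at hconst
  rw [hconst, mul_comm]

lemma eq_zero_of_mem_thetaSpace_zero (hq0 : q ≠ 0) (hq : ‖q‖ < 1) (hc0 : c ≠ 0)
    (hc : ∀ m : ℤ, c ≠ q ^ m) (hf : f ∈ thetaSpace q c 0) {x : ℂ} (hx : x ≠ 0) : f x = 0 := by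
  obtain ⟨α, hα⟩ := exists_apply_mul_exp_of_mem_thetaSpace_zero hq0 hq hc0 hf
  by_contra hfx
  have hperiod : Complex.exp (α * (2 * Real.pi * Complex.I)) = 1 := by
    have := hα x hx (2 * Real.pi * Complex.I)
    rwa [Complex.exp_two_pi_mul_I, mul_one, eq_comm, mul_eq_right₀ hfx] at this
  obtain ⟨m, hm⟩ := Complex.exp_eq_one_iff.1 hperiod
  have hαm : (α : ℂ) = m := mul_right_cancel₀ Complex.two_pi_I_ne_zero hm
  have hq_mul := hα x hx (Complex.log q)
  have hfq : f (q * x) = c * f x := by simpa using hf.2 x hx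
  rw [Complex.exp_log hq0, mul_comm, hfq, hαm, Complex.exp_int_mul, Complex.exp_log hq0] at hq_mul
  exact hc m (mul_right_cancel₀ hfx hq_mul)

lemma exists_eq_qtheta_mul (hq0 : q ≠ 0) (hq : ‖q‖ < 1) (hc : c ≠ 0)
    (hf : f ∈ thetaSpace q c (N + 1)) {p : ℂ} (hp : p ≠ 0) (hfp : f p = 0) :
    ∃ g ∈ thetaSpace q (c / -p) N, ∀ x, x ≠ 0 → f x = qtheta q (x / p) * g x := by
  have hderiv {x : ℂ} (hx : x ≠ 0) :
      HasDerivAt (fun x => qtheta q (x / p)) (deriv (qtheta q) (x / p) * (1 / p)) x :=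
    HasDerivAt.comp (h₂ := qtheta q) x (differentiableAt_qtheta hq (div_ne_zero hx hp)).hasDerivAt
      ((hasDerivAt_id' x).div_const p)
  have hdiff : DifferentiableOn ℂ (fun x => qtheta q (x / p)) {0}ᶜ := fun x hx =>
    (hderiv hx).differentiableAt.differentiableWithinAt
  obtain ⟨g, hg, hfg⟩ := exists_holomorphic_quotient isOpen_compl_singleton hf.1 hdiff
    fun x hx hθ => by
      obtain ⟨m, hm⟩ := (qtheta_eq_zero_iff hq0 hq (div_ne_zero hx hp)).1 hθ
      obtain rfl : x = p * q ^ m := by rw [← hm, mul_div_cancel₀ _ hp]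
      refine ⟨apply_mul_zpow_eq_zero hq0 hc hf hp hfp m, ?_⟩
      rw [(hderiv hx).deriv, hm]
      exact mul_ne_zero (deriv_qtheta_zpow_ne_zero hq0 hq m) (one_div_ne_zero hp)
  have hfunctional : ∀ x, x ≠ 0 →
      qtheta q (x / p) * (x ^ N * g (q * x) - c / -p * g x) = 0 := fun x hx => by
    have := hf.2 x hx
    rw [hfg x hx, hfg _ (mul_ne_zero hq0 hx), mul_div_assoc,
      qtheta_mul_q hq0 hq (div_ne_zero hx hp), pow_succ] at this
    field_simp at this ⊢
    linear_combination -this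
  have hgq : DifferentiableOn ℂ (fun x => g (q * x)) {0}ᶜ :=
    hg.comp (by fun_prop) fun x hx => mul_ne_zero hq0 hx
  rcases eq_zero_or_eq_zero_of_mul_eq_zero_of_punctured hdiff
    (((differentiableOn_pow N).mul hgq).sub (hg.const_mul _)) hfunctional with h | h
  · exact absurd (h (-p) (neg_ne_zero.2 hp)) (by
      rw [neg_div, div_self hp]
      exact qtheta_neg_one_ne_zero hq0 hq)
  · exact ⟨g, ⟨hg, fun x hx => sub_eq_zero.1 (h x hx)⟩, hfg⟩

lemma eq_zero_of_mem_thetaSpace (hq0 : q ≠ 0) (hq : ‖q‖ < 1) (hc0 : c ≠ 0)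
    (hf : f ∈ thetaSpace q c N) {p : Fin N → ℂ} (hp0 : ∀ i, p i ≠ 0)
    (hp : ∀ i j, i < j → qtheta q (p i / p j) ≠ 0) (hc : ∀ m : ℤ, c ≠ (∏ i, -p i) * q ^ m)
    (hfp : ∀ i, f (p i) = 0) {x : ℂ} (hx : x ≠ 0) : f x = 0 := by
  induction N generalizing f c with
  | zero => exact eq_zero_of_mem_thetaSpace_zero hq0 hq hc0 (by simpa using hc) hf hx
  | succ N ih =>
    have hlast : -p (Fin.last N) ≠ 0 := neg_ne_zero.2 (hp0 _)
    obtain ⟨g, hg, hfg⟩ := exists_eq_qtheta_mul hq0 hq hc0 hf (hp0 _) (hfp (Fin.last N))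
    rw [hfg x hx, ih (div_ne_zero hc0 hlast) hg (fun i => hp0 i.castSucc)
      (fun i j hij => hp _ _ (Fin.castSucc_lt_castSucc_iff.2 hij)) (fun m hm => hc m ?_)
      fun i => ?_, mul_zero]
    · rw [div_eq_iff hlast] at hm
      rw [hm, Fin.prod_univ_castSucc]
      ring
    · exact (mul_eq_zero.1 ((hfg _ (hp0 _)).symm.trans (hfp _))).resolve_left
        (hp _ _ (Fin.castSucc_lt_last i))

end ThetaSpace

/-! ### The theta analogue of the Vandermonde product -/

section ThetaProduct

variable {q : ℂ} {N : ℕ}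

/-- The theta analogue `∏_{i<j} z_j θ(z_i/z_j)` of the Vandermonde product. -/
noncomputable def bigTheta (q : ℂ) (z : Fin N → ℂ) : ℂ :=
  ∏ i, ∏ j ∈ Ioi i, z j * qtheta q (z i / z j)

lemma bigTheta_ne_zero_iff {z : Fin N → ℂ} (hz : ∀ i, z i ≠ 0) :
    bigTheta q z ≠ 0 ↔ ∀ i j, i < j → qtheta q (z i / z j) ≠ 0 := by
  simp [bigTheta, prod_ne_zero_iff, hz]

lemma bigTheta_eq_zero_of_eq (hq : ‖q‖ < 1) {z : Fin N → ℂ} (hz : ∀ i, z i ≠ 0)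
    {i j : Fin N} (hij : i ≠ j) (h : z i = z j) : bigTheta q z = 0 := by
  wlog hlt : i < j generalizing i j
  · exact this hij.symm h.symm (lt_of_le_of_ne (not_lt.1 hlt) hij.symm)
  refine prod_eq_zero (mem_univ i) (prod_eq_zero (mem_Ioi.2 hlt) ?_)
  rw [h, div_self (hz j), qtheta_one hq, mul_zero]

lemma prod_zpow_eq_zpow_sum {ι G₀ : Type*} [CommGroupWithZero G₀] {w : G₀} (hw : w ≠ 0)
    (s : Finset ι) (ν : ι → ℤ) : ∏ i ∈ s, w ^ ν i = w ^ ∑ i ∈ s, ν i := by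
  induction s using Finset.cons_induction with
  | empty => simp
  | cons i s hi ih => rw [prod_cons, sum_cons, zpow_add₀ hw, ih]

lemma mul_qtheta_div_shift (hq0 : q ≠ 0) (hq : ‖q‖ < 1) {x y : ℂ} (hx : x ≠ 0) (hy : y ≠ 0)
    (m n : ℤ) :
    y * q ^ n * qtheta q (x * q ^ m / (y * q ^ n)) * (gaussian q x m * gaussian q y n) =
      y * qtheta q (x / y) * (q ^ (m * n) * (-x) ^ n * (-y) ^ m) := by
  have hxy : x / y ≠ 0 := div_ne_zero hx hy
  rw [← gaussian_mul_qtheta hq0 hq hxy (m - n), mul_div_mul_comm, ← zpow_sub₀ hq0]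
  generalize qtheta q (x / y * q ^ (m - n)) = θ
  have hx_gauss : gaussian q x m = gaussian q x (m - n) * gaussian q x n * q ^ ((m - n) * n) := by
    rw [← gaussian_add hq0 hx, sub_add_cancel]
  have hxy_gauss : gaussian q x (m - n) = gaussian q (-(x / y)) (m - n) * (-y) ^ (m - n) := by
    rw [← gaussian_mul]
    congr 1
    field_simp
  have hdiag : q ^ n * gaussian q x n * gaussian q y n * q ^ ((m - n) * n) =
      q ^ (m * n) * (-x) ^ n * (-y) ^ n := by
    have hexp : n + Ring.choose n 2 + Ring.choose n 2 + (m - n) * n = m * n := by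
      linarith [two_mul_choose_two n]
    rw [← hexp, zpow_add₀ hq0, zpow_add₀ hq0, zpow_add₀ hq0, mul_assoc _ ((-x) ^ n), ← mul_zpow,
      neg_mul_neg, mul_zpow, gaussian, gaussian]
    ring
  have hpow : (-y) ^ (m - n) * (-y) ^ n = (-y) ^ m := by
    rw [← zpow_add₀ (neg_ne_zero.2 hy), sub_add_cancel]
  rw [hx_gauss, hxy_gauss, ← hpow]
  linear_combination y * θ * gaussian q (-(x / y)) (m - n) * (-y) ^ (m - n) * hdiag

lemma gaussian_neg_prod_neg (hq0 : q ≠ 0) {x : Fin N → ℂ} (hx : ∀ i, x i ≠ 0) (ν : Fin N → ℤ) :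
    gaussian q (-∏ i, -x i) (∑ i, ν i) =
      (∏ i, ∏ j ∈ Ioi i, q ^ (ν i * ν j) * (-x i) ^ ν j * (-x j) ^ ν i) *
        ∏ i, gaussian q (x i) (ν i) := by
  induction N with
  | zero => simp
  | succ N ih =>
    have hx_neg (i) : -x i ≠ 0 := neg_ne_zero.2 (hx i)
    set P := ∏ i : Fin N, -x i.succ
    set S := ∑ i : Fin N, ν i.succ
    have hP0 : P ≠ 0 := prod_ne_zero_iff.2 fun i _ => hx_neg _
    have htail : gaussian q (x 0 * P) S = gaussian q (-P) S * (-x 0) ^ S := by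
      rw [← gaussian_mul, neg_mul_neg, mul_comm]
    have hhead : ∏ j : Fin N, q ^ (ν 0 * ν j.succ) * (-x 0) ^ ν j.succ * (-x j.succ) ^ ν 0 =
        q ^ (ν 0 * S) * (-x 0) ^ S * P ^ ν 0 := by
      rw [prod_mul_distrib, prod_mul_distrib, prod_zpow_eq_zpow_sum hq0,
        prod_zpow_eq_zpow_sum (hx_neg 0), prod_zpow, mul_sum]
    simp only [Fin.prod_univ_succ, Fin.prod_Ioi_zero, Fin.prod_Ioi_succ, Fin.sum_univ_succ]
    rw [hhead, neg_mul, neg_neg, gaussian_add hq0 (mul_ne_zero (hx 0) hP0), htail, gaussian_mul,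
      ih (fun i => hx i.succ)]
    ring

lemma prod_prod_Ioi_mul_mul_prod {M : Type*} [CommMonoid M] (u : Fin N → M) :
    (∏ i, ∏ j ∈ Ioi i, u i * u j) * ∏ i, u i = ∏ i, u i ^ N := by
  rw [prod_prod_Ioi_mul_eq_prod_prod_off_diag fun _ i => u i, ← prod_mul_distrib]
  refine prod_congr rfl fun i _ => ?_
  rw [prod_const, card_compl, card_singleton, Fintype.card_fin, ← pow_succ,
    Nat.sub_add_cancel i.pos]

lemma bigTheta_shift (hq0 : q ≠ 0) (hq : ‖q‖ < 1) {x : Fin N → ℂ} (hx : ∀ i, x i ≠ 0)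
    (ν : Fin N → ℤ) :
    bigTheta q (fun i => x i * q ^ ν i) * ∏ i, gaussian q (x i) (ν i) ^ N =
      bigTheta q x * gaussian q (-∏ i, -x i) (∑ i, ν i) := by
  rw [← prod_prod_Ioi_mul_mul_prod, gaussian_neg_prod_neg hq0 hx, ← mul_assoc, ← mul_assoc]
  simp only [bigTheta, ← prod_mul_distrib, mul_qtheta_div_shift hq0 hq (hx _) (hx _)]

end ThetaProduct

/-! ### Rigidity of determinants of theta functions -/

section DetRigidity

open Function

variable {q w : ℂ} {N : ℕ} {f : Fin N → ℂ → ℂ} {x y : Fin N → ℂ}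

/-- The determinant `det (f_k(x_i))`. -/
noncomputable def ptDet (f : Fin N → ℂ → ℂ) (x : Fin N → ℂ) : ℂ :=
  (Matrix.of fun i k => f k (x i)).det

/-- The function `∏_{i<j} x_j θ(x_i/x_j) · θ(w ∏ (-x_i))`: like `ptDet f` for `f_k` in
`thetaSpace q w⁻¹ N`, it is antisymmetric and lies in that space in each variable. -/
noncomputable def refTheta (q w : ℂ) (x : Fin N → ℂ) : ℂ :=
  bigTheta q x * qtheta q (w * ∏ i, -x i)

lemma update_ne_zero (hx : ∀ i, x i ≠ 0) (i : Fin N) {s : ℂ} (hs : s ≠ 0) (j : Fin N) :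
    update x i s j ≠ 0 :=
  (forall_update_iff x fun _ b => b ≠ 0).2 ⟨hs, fun j _ => hx j⟩ j

lemma prod_neg_ne_zero (hx : ∀ i, x i ≠ 0) : ∏ i, -x i ≠ 0 :=
  prod_ne_zero_iff.2 fun i _ => neg_ne_zero.2 (hx i)

lemma ptDet_eq_zero_of_eq {i j : Fin N} (hij : i ≠ j) (h : x i = x j) : ptDet f x = 0 :=
  Matrix.det_zero_of_row_eq hij (by ext k; simp [h])

lemma refTheta_eq_zero_of_eq (hq : ‖q‖ < 1) (hx : ∀ i, x i ≠ 0) {i j : Fin N} (hij : i ≠ j)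
    (h : x i = x j) : refTheta q w x = 0 := by
  rw [refTheta, bigTheta_eq_zero_of_eq hq hx hij h, zero_mul]

lemma ptDet_update_mem {V : Submodule ℂ (ℂ → ℂ)} (hf : ∀ k, f k ∈ V) (x : Fin N → ℂ)
    (i : Fin N) : (fun s => ptDet f (update x i s)) ∈ V := by
  let M : Matrix (Fin N) (Fin N) ℂ := Matrix.of fun i k => f k (x i)
  have hexpand : (fun s => ptDet f (update x i s)) =
      ∑ k, M.adjugate k i • f k := by
    ext s
    have hrow : (Matrix.of fun j k => f k (update x i s j)) = M.updateRow i fun k => f k s := by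
      ext j k
      rcases eq_or_ne j i with rfl | hji <;> simp [M, *]
    rw [ptDet, hrow, Matrix.det_eq_sum_mul_adjugate_row _ i]
    simp [Matrix.adjugate_apply, mul_comm]
  rw [hexpand]
  exact V.sum_mem fun k _ => V.smul_mem _ (hf k)

lemma refTheta_update_mul_q (hq0 : q ≠ 0) (hq : ‖q‖ < 1) (hw : w ≠ 0) (hx : ∀ i, x i ≠ 0)
    (i : Fin N) : x i ^ N * refTheta q w (update x i (q * x i)) = w⁻¹ * refTheta q w x := by
  have hP : ∏ j, -x j ≠ 0 := prod_neg_ne_zero hx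
  have hupdate : update x i (q * x i) = fun j => x j * q ^ (Pi.single i 1 : Fin N → ℤ) j := by
    ext j
    rcases eq_or_ne j i with rfl | hji <;> simp [*, mul_comm]
  have hgauss : ∏ j, gaussian q (x j) ((Pi.single i 1 : Fin N → ℤ) j) ^ N = x i ^ N := by
    rw [prod_eq_single i (fun j _ hji => by simp [hji]) (by simp)]
    simp
  have hbig : bigTheta q (update x i (q * x i)) * x i ^ N = bigTheta q x * -∏ j, -x j := by
    simpa [hupdate, hgauss] using bigTheta_shift hq0 hq hx (Pi.single i 1)
  have hprod : w * ∏ j, -update x i (q * x i) j = q * (w * ∏ j, -x j) := by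
    simp only [hupdate, ← neg_mul, prod_mul_distrib, prod_zpow_eq_zpow_sum hq0]
    simp
    ring
  rw [refTheta, refTheta, hprod, qtheta_mul_q hq0 hq (mul_ne_zero hw hP)]
  generalize qtheta q (w * ∏ j, -x j) = θ
  calc _ = bigTheta q (update x i (q * x i)) * x i ^ N * (-(w * ∏ j, -x j)⁻¹ * θ) := by ring
    _ = w⁻¹ * (bigTheta q x * θ) := by rw [hbig]; field_simp

lemma refTheta_update_mem_thetaSpace (hq0 : q ≠ 0) (hq : ‖q‖ < 1) (hw : w ≠ 0)
    (hx : ∀ i, x i ≠ 0) (i : Fin N) :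
    (fun s => refTheta q w (update x i s)) ∈ thetaSpace q w⁻¹ N := by
  refine ⟨fun s (hs : s ≠ 0) => DifferentiableAt.differentiableWithinAt ?_, fun s hs => ?_⟩
  · have hz : ∀ j, update x i s j ≠ 0 := update_ne_zero hx i hs
    have hcoord (j : Fin N) : DifferentiableAt ℂ (fun s => update x i s j) s := by
      rcases eq_or_ne j i with rfl | hji <;> simp [*]
    have hprod : DifferentiableAt ℂ (fun s => w * ∏ j, -update x i s j) s :=
      (DifferentiableAt.fun_finsetProd fun j _ => (hcoord j).neg).const_mul w
    have hbig : DifferentiableAt ℂ (fun s => bigTheta q (update x i s)) s :=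
      DifferentiableAt.fun_finsetProd fun j _ => DifferentiableAt.fun_finsetProd fun k _ =>
        (hcoord k).mul <| (differentiableAt_qtheta hq (div_ne_zero (hz j) (hz k))).fun_comp' s <|
          (hcoord j).fun_div (hcoord k) (hz k)
    exact hbig.mul <|
      (differentiableAt_qtheta hq (mul_ne_zero hw (prod_neg_ne_zero hz))).fun_comp' s hprod
  · simpa using refTheta_update_mul_q hq0 hq hw (update_ne_zero hx i hs) i

lemma ptDet_update_mul_refTheta (hq0 : q ≠ 0) (hq : ‖q‖ < 1) (hw : w ≠ 0)
    (hf : ∀ k, f k ∈ thetaSpace q w⁻¹ N) (hx : ∀ i, x i ≠ 0) (i : Fin N) {t : ℂ} (ht : t ≠ 0)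
    (hxt : refTheta q w (update x i t) ≠ 0) :
    ptDet f (update x i t) * refTheta q w x = ptDet f x * refTheta q w (update x i t) := by
  set y := update x i t with hy
  have hy0 : ∀ j, y j ≠ 0 := update_ne_zero hx i ht
  obtain ⟨hbig, hθ⟩ := mul_ne_zero_iff.1 hxt
  set F : ℂ → ℂ := ptDet f y • (fun s => refTheta q w (update x i s)) -
    refTheta q w y • (fun s => ptDet f (update x i s)) with hF
  have hF_mem : F ∈ thetaSpace q w⁻¹ N :=
    sub_mem (Submodule.smul_mem _ _ (refTheta_update_mem_thetaSpace hq0 hq hw hx i))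
      (Submodule.smul_mem _ _ (ptDet_update_mem hf x i))
  have hF_zero (j : Fin N) : F (y j) = 0 := by
    rcases eq_or_ne j i with rfl | hji
    · simp [hF, hy, mul_comm]
    · have hcoll : update x i (y j) j = update x i (y j) i := by simp [hy, hji]
      simp [hF, ptDet_eq_zero_of_eq hji hcoll,
        refTheta_eq_zero_of_eq hq (update_ne_zero hx i (hy0 j)) hji hcoll]
  have hw_prod (m : ℤ) : w⁻¹ ≠ (∏ j, -y j) * q ^ m := fun h =>
    hθ <| (qtheta_eq_zero_iff hq0 hq (mul_ne_zero hw (prod_neg_ne_zero hy0))).2 ⟨-m, by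
      rw [zpow_neg]
      exact eq_inv_of_mul_eq_one_left (by rw [mul_assoc, ← h, mul_inv_cancel₀ hw])⟩
  have hFx : F (x i) = 0 := eq_zero_of_mem_thetaSpace hq0 hq (inv_ne_zero hw) hF_mem hy0
    ((bigTheta_ne_zero_iff hy0).1 hbig) hw_prod hF_zero (hx i)
  simpa [hF, sub_eq_zero, mul_comm] using hFx

lemma exists_refTheta_update_ne_zero (hq0 : q ≠ 0) (hq : ‖q‖ < 1) (hw : w ≠ 0)
    (hx : ∀ i, x i ≠ 0) (hy : ∀ i, y i ≠ 0) (hxθ : refTheta q w x ≠ 0)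
    (hyθ : refTheta q w y ≠ 0) (i : Fin N) :
    ∃ t, t ≠ 0 ∧ refTheta q w (update x i t) ≠ 0 ∧ refTheta q w (update y i t) ≠ 0 := by
  by_contra! h
  have hmul (t : ℂ) (ht : t ≠ 0) : refTheta q w (update x i t) * refTheta q w (update y i t) = 0 :=
    mul_eq_zero.2 (or_iff_not_imp_left.2 (h t ht))
  rcases eq_zero_or_eq_zero_of_mul_eq_zero_of_punctured
    (refTheta_update_mem_thetaSpace hq0 hq hw hx i).1
    (refTheta_update_mem_thetaSpace hq0 hq hw hy i).1 hmul with h0 | h0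
  · exact hxθ (by simpa using h0 (x i) (hx i))
  · exact hyθ (by simpa using h0 (y i) (hy i))

/-- The coordinates of both points are replaced, one at a time, by a common generic value. -/
lemma ptDet_mul_refTheta (hq0 : q ≠ 0) (hq : ‖q‖ < 1) (hw : w ≠ 0)
    (hf : ∀ k, f k ∈ thetaSpace q w⁻¹ N) (hx : ∀ i, x i ≠ 0) (hy : ∀ i, y i ≠ 0)
    (hxθ : refTheta q w x ≠ 0) (hyθ : refTheta q w y ≠ 0) :
    ptDet f x * refTheta q w y = ptDet f y * refTheta q w x := by
  suffices h : ∀ s : Finset (Fin N), ∀ x y : Fin N → ℂ, (∀ i, x i ≠ 0) → (∀ i, y i ≠ 0) →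
      refTheta q w x ≠ 0 → refTheta q w y ≠ 0 → (∀ i ∉ s, x i = y i) →
      ptDet f x * refTheta q w y = ptDet f y * refTheta q w x from
    h univ x y hx hy hxθ hyθ (by simp)
  intro s
  induction s using Finset.induction_on with
  | empty => intro x y _ _ _ _ h; rw [funext fun i => h i (notMem_empty i)]
  | insert i s _ ih =>
    intro x y hx hy hxθ hyθ h
    obtain ⟨t, ht, hxt, hyt⟩ := exists_refTheta_update_ne_zero hq0 hq hw hx hy hxθ hyθ i
    have hagree (j) (hj : j ∉ s) : update x i t j = update y i t j := by
      rcases eq_or_ne j i with rfl | hji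
      · simp
      · simpa [hji] using h j (by simp [hji, hj])
    have hx_move := ptDet_update_mul_refTheta hq0 hq hw hf hx i ht hxt
    have hy_move := ptDet_update_mul_refTheta hq0 hq hw hf hy i ht hyt
    have hxy := ih _ _ (update_ne_zero hx i ht) (update_ne_zero hy i ht) hxt hyt hagree
    rw [← div_eq_div_iff hxt hxθ] at hx_move
    rw [← div_eq_div_iff hyt hyθ] at hy_move
    rw [← div_eq_div_iff hxt hyt] at hxy
    rw [← div_eq_div_iff hxθ hyθ, ← hx_move, ← hy_move, hxy]

lemma ptDet_mul_bigTheta (hq0 : q ≠ 0) (hq : ‖q‖ < 1) (hw : w ≠ 0)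
    (hf : ∀ k, f k ∈ thetaSpace q w⁻¹ N) (hx : ∀ i, x i ≠ 0) (hy : ∀ i, y i ≠ 0)
    (hxθ : bigTheta q x ≠ 0) (hyθ : bigTheta q y ≠ 0) (hxy : ∏ i, x i = ∏ i, y i)
    (hθ : qtheta q (w * ∏ i, -x i) ≠ 0) :
    ptDet f x * bigTheta q y = ptDet f y * bigTheta q x := by
  have hprod : ∏ i, -y i = ∏ i, -x i := by rw [prod_neg, prod_neg, hxy]
  have h := ptDet_mul_refTheta hq0 hq hw hf hx hy (mul_ne_zero hxθ hθ)
    (mul_ne_zero hyθ (hprod ▸ hθ))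
  rw [refTheta, refTheta, hprod, ← mul_assoc, ← mul_assoc] at h
  exact mul_right_cancel₀ hθ h

end DetRigidity

/-! ### One-dimensional lattice sums -/

section LatticeSum

open Metric

variable {q w : ℂ} {N k : ℕ} {a b : Fin N → ℂ}

lemma norm_prod_one_sub_le (hq : ‖q‖ < 1) {y : ℂ} {R : ℝ} (hy : ‖y‖ ≤ R) (s : Finset ℕ) :
    ‖∏ i ∈ s, (1 - q ^ i * y)‖ ≤ Real.exp (R / (1 - ‖q‖)) := by
  have hsum := (summable_geometric_of_lt_one (norm_nonneg q) hq).mul_right ‖y‖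
  calc ‖∏ i ∈ s, (1 - q ^ i * y)‖ ≤ ∏ i ∈ s, Real.exp (‖q‖ ^ i * ‖y‖) := by
        rw [norm_prod]
        refine prod_le_prod (fun _ _ => norm_nonneg _) fun i _ => ?_
        calc ‖1 - q ^ i * y‖ ≤ ‖q‖ ^ i * ‖y‖ + 1 := by
              simpa [add_comm] using norm_sub_le 1 (q ^ i * y)
          _ ≤ _ := Real.add_one_le_exp _
    _ = Real.exp (∑ i ∈ s, ‖q‖ ^ i * ‖y‖) := (Real.exp_sum _ _).symm
    _ ≤ Real.exp (∑' i, ‖q‖ ^ i * ‖y‖) :=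
        Real.exp_le_exp.2 (hsum.sum_le_tsum s fun _ _ => by positivity)
    _ = Real.exp (‖y‖ / (1 - ‖q‖)) := by
        rw [tsum_mul_right, tsum_geometric_of_lt_one (norm_nonneg q) hq, div_eq_inv_mul]
    _ ≤ Real.exp (R / (1 - ‖q‖)) := by
        have := sub_pos.2 hq
        gcongr

lemma norm_qp_le (hq : ‖q‖ < 1) {y : ℂ} {R : ℝ} (hy : ‖y‖ ≤ R) :
    ‖qp q y‖ ≤ Real.exp (R / (1 - ‖q‖)) :=
  le_of_tendsto (multipliable_qp hq y).hasProd.norm <| .of_forall fun s => by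
    simpa only [norm_prod] using norm_prod_one_sub_le hq hy s

lemma gaussian_mul_qp_div (hq0 : q ≠ 0) (hq : ‖q‖ < 1) {u : ℂ} (hu : u ≠ 0) (m : ℕ) :
    gaussian q (-u) m * qp q (q / (u * q ^ m)) =
      (∏ i ∈ range m, (1 - q ^ i * u)) * qp q (q / u) := by
  induction m with
  | zero => simp
  | succ m ih =>
    have huq : u * q ^ m ≠ 0 := mul_ne_zero hu (pow_ne_zero _ hq0)
    have harg : q / (u * q ^ (m + 1)) = (u * q ^ m)⁻¹ := by
      rw [pow_succ]
      field_simp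
    rw [prod_range_succ, Nat.cast_succ, gaussian_add_one hq0 (neg_ne_zero.2 hu), harg,
      qp_eq_one_sub_mul hq, ← div_eq_mul_inv, zpow_natCast]
    calc _ = u * q ^ m * ((u * q ^ m)⁻¹ - 1) *
          (gaussian q (-u) m * qp q (q / (u * q ^ m))) := by ring
      _ = _ := by
        rw [ih, mul_sub, mul_inv_cancel₀ huq]
        ring

lemma gaussian_mul_qp_mul_qp (hq0 : q ≠ 0) (hq : ‖q‖ < 1) (a : ℂ) {b x : ℂ} (hb : b ≠ 0)
    (hx : x ≠ 0) (m : ℕ) :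
    gaussian q x m * (qp q (q * a⁻¹ * (x * q ^ m)) * qp q (q * b⁻¹ * (x * q ^ m)⁻¹)) =
      qp q (q * a⁻¹ * (x * q ^ m)) * (∏ i ∈ range m, (1 - q ^ i * (b * x))) *
        qp q (q / (b * x)) * (-b⁻¹) ^ m := by
  have hgauss : gaussian q x m = gaussian q (-(b * x)) m * (-b⁻¹) ^ m := by
    rw [← zpow_natCast, ← gaussian_mul]
    congr 1
    field_simp
  have harg : q * b⁻¹ * (x * q ^ m)⁻¹ = q / (b * x * q ^ m) := by
    rw [mul_assoc q, ← mul_inv, ← div_eq_mul_inv, mul_assoc b]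
  rw [mul_assoc (qp q _), ← gaussian_mul_qp_div hq0 hq (mul_ne_zero hb hx), hgauss, harg]
  ring

lemma exists_gaussian_mul_qp_mul_qp_bound (hq0 : q ≠ 0) (hq : ‖q‖ < 1) (a : ℂ) {b : ℂ}
    (hb : b ≠ 0) (ρ : ℝ) :
    ∃ C : ℝ, ∀ x : ℂ, x ≠ 0 → ‖x‖ ≤ ρ → ‖x⁻¹‖ ≤ ρ → ∀ m : ℕ,
      ‖gaussian q x m * (qp q (q * a⁻¹ * (x * q ^ m)) * qp q (q * b⁻¹ * (x * q ^ m)⁻¹))‖ ≤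
        C * ‖b‖⁻¹ ^ m := by
  set E := fun R : ℝ => Real.exp (R / (1 - ‖q‖))
  refine ⟨E (‖a⁻¹‖ * ρ) * E (‖b‖ * ρ) * E (‖b⁻¹‖ * ρ), fun x hx hxρ hxρ' m => ?_⟩
  have hq_pow : ‖q ^ (m + 1)‖ ≤ 1 := by
    rw [norm_pow]
    exact pow_le_one₀ (norm_nonneg q) hq.le
  have ha_arg : ‖q * a⁻¹ * (x * q ^ m)‖ ≤ ‖a⁻¹‖ * ρ :=
    calc ‖q * a⁻¹ * (x * q ^ m)‖ = ‖q ^ (m + 1)‖ * (‖a⁻¹‖ * ‖x‖) := by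
          rw [← norm_mul, ← norm_mul]
          ring_nf
      _ ≤ 1 * (‖a⁻¹‖ * ρ) := by gcongr
      _ = _ := one_mul _
  have hb_arg : ‖b * x‖ ≤ ‖b‖ * ρ := by
    rw [norm_mul]
    gcongr
  have hb_arg' : ‖q / (b * x)‖ ≤ ‖b⁻¹‖ * ρ :=
    calc ‖q / (b * x)‖ = ‖q‖ * (‖b⁻¹‖ * ‖x⁻¹‖) := by
          rw [div_eq_mul_inv, mul_inv, norm_mul, norm_mul]
      _ ≤ 1 * (‖b⁻¹‖ * ρ) := by gcongr
      _ = _ := one_mul _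
  rw [gaussian_mul_qp_mul_qp hq0 hq a hb hx, norm_mul, norm_mul, norm_mul, norm_pow, norm_neg,
    norm_inv]
  gcongr
  · exact norm_qp_le hq ha_arg
  · exact norm_prod_one_sub_le hq hb_arg _
  · simpa using norm_qp_le hq hb_arg'

/-- The weight `∏_j (q a_j⁻¹ z)_∞ (q b_j⁻¹ z⁻¹)_∞`. -/
noncomputable def weight (q : ℂ) (a b : Fin N → ℂ) (z : ℂ) : ℂ :=
  ∏ j, qp q (q * (a j)⁻¹ * z) * qp q (q * (b j)⁻¹ * z⁻¹)

lemma weight_inv (q : ℂ) (a b : Fin N → ℂ) (z : ℂ) : weight q a b z⁻¹ = weight q b a z := by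
  simp only [weight, inv_inv, mul_comm]

lemma exists_gaussian_pow_mul_weight_bound (hq0 : q ≠ 0) (hq : ‖q‖ < 1) (a : Fin N → ℂ)
    (hb : ∀ i, b i ≠ 0) (ρ : ℝ) :
    ∃ C : ℝ, ∀ x : ℂ, x ≠ 0 → ‖x‖ ≤ ρ → ‖x⁻¹‖ ≤ ρ → ∀ m : ℕ,
      ‖gaussian q x m ^ N * weight q a b (x * q ^ m)‖ ≤ C * ‖∏ i, b i‖⁻¹ ^ m := by
  choose C hC using fun j => exists_gaussian_mul_qp_mul_qp_bound hq0 hq (a j) (hb j) ρ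
  refine ⟨∏ j, C j, fun x hx hxρ hxρ' m => ?_⟩
  have hpow : gaussian q x m ^ N = ∏ _j : Fin N, gaussian q x m := by simp
  rw [hpow, weight, ← prod_mul_distrib, norm_prod, norm_prod, ← prod_inv_distrib, ← prod_pow,
    ← prod_mul_distrib]
  exact prod_le_prod (fun _ _ => norm_nonneg _) fun j _ => hC j x hx hxρ hxρ' m

/-- The contribution of the lattice point `z = x qᵐ` to the one-dimensional sum: the weight times
`zᵏ`, multiplied by the Gaussian factor coming from the quasi-periodicity of `bigTheta`. -/
noncomputable def latTerm (q : ℂ) (a b : Fin N → ℂ) (k : ℕ) (x : ℂ) (m : ℤ) : ℂ :=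
  gaussian q x m ^ N * (weight q a b (x * q ^ m) * (x * q ^ m) ^ k)

/-- The theta function `∑_m wᵐ latTerm(x, m)` of degree `N` in `x`. -/
noncomputable def latSum (q : ℂ) (a b : Fin N → ℂ) (w : ℂ) (k : ℕ) (x : ℂ) : ℂ :=
  ∑' m : ℤ, w ^ m * latTerm q a b k x m

lemma gaussian_neg (hq0 : q ≠ 0) (x : ℂ) (m : ℤ) :
    gaussian q x (-m) = gaussian q x⁻¹ m * q ^ m := by
  have hchoose : Ring.choose (-m) 2 = Ring.choose m 2 + m := by
    linarith [two_mul_choose_two m, two_mul_choose_two (-m)]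
  rw [gaussian, gaussian, hchoose, zpow_add₀ hq0, zpow_neg, inv_zpow]
  ring

lemma latTerm_neg (hq0 : q ≠ 0) (x : ℂ) (m : ℤ) :
    latTerm q a b k x (-m) = gaussian q x⁻¹ m ^ N * weight q b a (x⁻¹ * q ^ m) *
      ((q ^ m) ^ N * (x * q ^ (-m)) ^ k) := by
  rw [latTerm, gaussian_neg hq0 x, ← weight_inv, mul_inv, ← zpow_neg, neg_neg]
  ring

lemma exists_latTerm_natCast_bound (hq0 : q ≠ 0) (hq : ‖q‖ < 1) (a : Fin N → ℂ)
    (hb : ∀ i, b i ≠ 0) (k : ℕ) (ρ : ℝ) :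
    ∃ C : ℝ, ∀ x : ℂ, x ≠ 0 → ‖x‖ ≤ ρ → ‖x⁻¹‖ ≤ ρ → ∀ m : ℕ,
      ‖latTerm q a b k x m‖ ≤ C * ‖∏ i, b i‖⁻¹ ^ m := by
  obtain ⟨B, hB⟩ := exists_gaussian_pow_mul_weight_bound hq0 hq a hb ρ
  refine ⟨B * ρ ^ k, fun x hx hxρ hxρ' m => ?_⟩
  have hpow : ‖(x * q ^ m) ^ k‖ ≤ ρ ^ k := by
    rw [norm_pow, norm_mul, norm_pow]
    gcongr
    exact (mul_le_of_le_one_right (norm_nonneg x)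
      (pow_le_one₀ (norm_nonneg q) hq.le)).trans hxρ
  calc ‖latTerm q a b k x m‖
      = ‖gaussian q x m ^ N * weight q a b (x * q ^ m)‖ * ‖(x * q ^ m) ^ k‖ := by
        rw [latTerm, zpow_natCast, ← mul_assoc, norm_mul]
    _ ≤ B * ‖∏ i, b i‖⁻¹ ^ m * ρ ^ k :=
        mul_le_mul (hB x hx hxρ hxρ' m) hpow (norm_nonneg _)
          ((norm_nonneg _).trans (hB x hx hxρ hxρ' m))
    _ = _ := by ring

lemma exists_latTerm_neg_natCast_bound (hq0 : q ≠ 0) (hq : ‖q‖ < 1) (ha : ∀ i, a i ≠ 0)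
    (b : Fin N → ℂ) (hk : k < N) (ρ : ℝ) :
    ∃ C : ℝ, ∀ x : ℂ, x ≠ 0 → ‖x‖ ≤ ρ → ‖x⁻¹‖ ≤ ρ → ∀ m : ℕ,
      ‖latTerm q a b k x (-m)‖ ≤ C * (‖q‖ * ‖∏ i, a i‖⁻¹) ^ m := by
  obtain ⟨A, hA⟩ := exists_gaussian_pow_mul_weight_bound hq0 hq b ha ρ
  refine ⟨A * ρ ^ k, fun x hx hxρ hxρ' m => ?_⟩
  have hAx := hA x⁻¹ (inv_ne_zero hx) hxρ' (by rwa [inv_inv]) m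
  have hρ : 0 ≤ ρ := (norm_nonneg x).trans hxρ
  have hpow : ‖(q ^ m) ^ N * (x * (q ^ m)⁻¹) ^ k‖ ≤ ρ ^ k * ‖q‖ ^ m := by
    have hsplit : (q ^ m) ^ N * (x * (q ^ m)⁻¹) ^ k = x ^ k * (q ^ m) ^ (N - k) := by
      rw [← Nat.sub_add_cancel hk.le, pow_add, mul_pow, inv_pow, Nat.add_sub_cancel]
      field_simp
    have hqm : (‖q‖ ^ m) ^ (N - k) ≤ ‖q‖ ^ m :=
      pow_le_of_le_one (by positivity) (pow_le_one₀ (norm_nonneg q) hq.le)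
        (Nat.sub_pos_of_lt hk).ne'
    rw [hsplit, norm_mul, norm_pow, norm_pow, norm_pow]
    gcongr
  calc ‖latTerm q a b k x (-m)‖
      = ‖gaussian q x⁻¹ m ^ N * weight q b a (x⁻¹ * q ^ m)‖ *
          ‖(q ^ m) ^ N * (x * (q ^ m)⁻¹) ^ k‖ := by
        rw [latTerm_neg hq0, norm_mul, zpow_neg, zpow_natCast]
    _ ≤ A * ‖∏ i, a i‖⁻¹ ^ m * (ρ ^ k * ‖q‖ ^ m) :=
        mul_le_mul hAx hpow (norm_nonneg _) ((norm_nonneg _).trans hAx)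
    _ = _ := by ring

lemma summable_pow_natAbs {c : ℝ} (hc0 : 0 ≤ c) (hc1 : c < 1) :
    Summable fun m : ℤ => c ^ m.natAbs := by
  refine Summable.of_nat_of_neg ?_ ?_ <;> simpa using summable_geometric_of_lt_one hc0 hc1

lemma exists_summable_bound_latTerm (hq0 : q ≠ 0) (hq : ‖q‖ < 1) (hwb : ‖w‖ < ‖∏ i, b i‖)
    (hwa : ‖q‖ < ‖w‖ * ‖∏ i, a i‖) (hk : k < N) (ρ : ℝ) :
    ∃ u : ℤ → ℝ, Summable u ∧ ∀ x : ℂ, x ≠ 0 → ‖x‖ ≤ ρ → ‖x⁻¹‖ ≤ ρ → ∀ m : ℤ,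
      ‖w ^ m * latTerm q a b k x m‖ ≤ u m := by
  have hwa0 : 0 < ‖w‖ * ‖∏ i, a i‖ := (norm_nonneg q).trans_lt hwa
  have hb0 : 0 < ‖∏ i, b i‖ := (norm_nonneg w).trans_lt hwb
  have ha (i : Fin N) : a i ≠ 0 :=
    prod_ne_zero_iff.1 (norm_ne_zero_iff.1 (right_ne_zero_of_mul hwa0.ne')) i (mem_univ i)
  have hb (i : Fin N) : b i ≠ 0 := prod_ne_zero_iff.1 (norm_pos_iff.1 hb0) i (mem_univ i)
  obtain ⟨B, hB⟩ := exists_latTerm_natCast_bound hq0 hq a hb k ρ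
  obtain ⟨A, hA⟩ := exists_latTerm_neg_natCast_bound hq0 hq ha b hk ρ
  set β := ‖w‖ * ‖∏ i, b i‖⁻¹ with hβ
  set α := ‖w‖⁻¹ * (‖q‖ * ‖∏ i, a i‖⁻¹) with hα
  have hβ1 : β < 1 := by rwa [hβ, ← div_eq_mul_inv, div_lt_one hb0]
  have hα1 : α < 1 := by
    rwa [hα, mul_left_comm, ← mul_inv, ← div_eq_mul_inv, div_lt_one hwa0]
  refine ⟨fun m => |B| * β ^ m.natAbs + |A| * α ^ m.natAbs,
    ((summable_pow_natAbs (by positivity) hβ1).mul_left _).add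
      ((summable_pow_natAbs (by positivity) hα1).mul_left _),
    fun x hx hxρ hxρ' m => ?_⟩
  obtain ⟨l, rfl | rfl⟩ := m.eq_nat_or_neg
  · calc ‖w ^ (l : ℤ) * latTerm q a b k x l‖
        ≤ ‖w‖ ^ l * (|B| * ‖∏ i, b i‖⁻¹ ^ l) := by
          rw [norm_mul, zpow_natCast, norm_pow]
          gcongr
          exact (hB x hx hxρ hxρ' l).trans (by gcongr; exact le_abs_self B)
      _ = |B| * β ^ l := by rw [hβ, mul_pow, mul_left_comm]
      _ ≤ _ := le_add_of_nonneg_right (by positivity)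
  · calc ‖w ^ (-l : ℤ) * latTerm q a b k x (-l)‖
        ≤ ‖w‖⁻¹ ^ l * (|A| * (‖q‖ * ‖∏ i, a i‖⁻¹) ^ l) := by
          rw [norm_mul, zpow_neg, zpow_natCast, norm_inv, norm_pow, ← inv_pow]
          gcongr
          exact (hA x hx hxρ hxρ' l).trans (by gcongr; exact le_abs_self A)
      _ = |A| * α ^ (-l : ℤ).natAbs := by
          rw [Int.natAbs_neg, Int.natAbs_natCast, hα, mul_pow ‖w‖⁻¹, mul_left_comm]
      _ ≤ _ := le_add_of_nonneg_left (by positivity)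

lemma summable_norm_zpow_mul_latTerm (hq0 : q ≠ 0) (hq : ‖q‖ < 1) (hwb : ‖w‖ < ‖∏ i, b i‖)
    (hwa : ‖q‖ < ‖w‖ * ‖∏ i, a i‖) (hk : k < N) {x : ℂ} (hx : x ≠ 0) :
    Summable fun m : ℤ => ‖w ^ m * latTerm q a b k x m‖ := by
  obtain ⟨u, hu, hle⟩ := exists_summable_bound_latTerm hq0 hq hwb hwa hk (max ‖x‖ ‖x⁻¹‖)
  exact .of_nonneg_of_le (fun _ => norm_nonneg _)
    (hle x hx (le_max_left _ _) (le_max_right _ _)) hu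

lemma differentiableAt_latTerm (hq0 : q ≠ 0) (hq : ‖q‖ < 1) (a b : Fin N → ℂ) (k : ℕ) (m : ℤ)
    {x : ℂ} (hx : x ≠ 0) : DifferentiableAt ℂ (fun x => latTerm q a b k x m) x := by
  have hxq : x * q ^ m ≠ 0 := mul_ne_zero hx (zpow_ne_zero _ hq0)
  have hgauss : DifferentiableAt ℂ (fun x => gaussian q x m) x :=
    (differentiableAt_zpow.2 (Or.inl hx)).const_mul _
  have hweight : DifferentiableAt ℂ (fun x => weight q a b (x * q ^ m)) x :=
    DifferentiableAt.fun_finsetProd fun j _ =>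
      ((differentiable_qp hq _).fun_comp' x (by fun_prop)).mul
        ((differentiable_qp hq _).fun_comp' x (by fun_prop (disch := assumption)))
  exact (hgauss.pow N).mul (hweight.mul (by fun_prop))

lemma differentiableOn_latSum (hq0 : q ≠ 0) (hq : ‖q‖ < 1) (hwb : ‖w‖ < ‖∏ i, b i‖)
    (hwa : ‖q‖ < ‖w‖ * ‖∏ i, a i‖) (hk : k < N) :
    DifferentiableOn ℂ (latSum q a b w k) {0}ᶜ := by
  intro x (hx : x ≠ 0)
  have hx_pos : 0 < ‖x‖ := norm_pos_iff.2 hx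
  set r := ‖x‖ / 2 with hr
  have hlow {y : ℂ} (hy : y ∈ ball x r) : r < ‖y‖ := by
    linarith [norm_sub_norm_le x y, mem_ball_iff_norm'.1 hy]
  have hne {y : ℂ} (hy : y ∈ ball x r) : y ≠ 0 := norm_pos_iff.1 <| by linarith [hlow hy]
  obtain ⟨u, hu, hle⟩ :=
    exists_summable_bound_latTerm hq0 hq hwb hwa hk (max (‖x‖ + r) r⁻¹)
  refine ((Complex.differentiableOn_tsum_of_summable_norm hu (fun m y hy => ?_) isOpen_ball
    fun m y hy => ?_).differentiableAt (ball_mem_nhds x (half_pos hx_pos))).differentiableWithinAt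
  · exact ((differentiableAt_latTerm hq0 hq a b k m (hne hy)).const_mul _).differentiableWithinAt
  · refine hle y (hne hy) (le_max_of_le_left ?_) (le_max_of_le_right ?_) m
    · linarith [norm_sub_norm_le y x, mem_ball_iff_norm.1 hy]
    · rw [norm_inv]
      exact inv_anti₀ (half_pos hx_pos) (hlow hy).le

lemma latSum_mem_thetaSpace (hq0 : q ≠ 0) (hq : ‖q‖ < 1) (hwb : ‖w‖ < ‖∏ i, b i‖)
    (hwa : ‖q‖ < ‖w‖ * ‖∏ i, a i‖) (hk : k < N) :
    latSum q a b w k ∈ thetaSpace q w⁻¹ N := by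
  refine ⟨differentiableOn_latSum hq0 hq hwb hwa hk, fun x hx => ?_⟩
  have hw : w ≠ 0 := fun h => by simp [h, (norm_nonneg q).not_gt] at hwa
  rw [latSum, latSum, ← tsum_mul_left, ← tsum_mul_left,
    ← (Equiv.addRight (1 : ℤ)).tsum_eq fun m : ℤ => w⁻¹ * (w ^ m * latTerm q a b k x m)]
  refine tsum_congr fun m => ?_
  have hgauss : gaussian q x (m + 1) = x * gaussian q (q * x) m := by
    rw [gaussian_add_one hq0 hx, mul_comm q x, gaussian_mul, mul_assoc, mul_comm (q ^ m)]
  have harg : x * q ^ (m + 1) = q * x * q ^ m := by rw [zpow_add_one₀ hq0]; ring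
  rw [Equiv.coe_addRight, latTerm, latTerm, hgauss, harg, zpow_add_one₀ hw, mul_pow x]
  field_simp

end LatticeSum

/-! ### Constant terms of multiple Laurent series -/

section MultipleSum

variable {κ R : Type*} [NormedCommRing R] {N : ℕ} {F : Fin N → κ → R}

lemma summable_norm_prod_pi (hF : ∀ i, Summable fun m => ‖F i m‖) :
    Summable fun ν : Fin N → κ => ‖∏ i, F i (ν i)‖ := by
  induction N with
  | zero => exact (hasSum_fintype _).summable
  | succ N ih =>
    rw [← (Fin.consEquiv fun _ => κ).summable_iff]
    simpa [Function.comp_def, Fin.consEquiv, Fin.prod_univ_succ] using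
      (hF 0).mul_norm (ih fun i => hF i.succ)

lemma tsum_prod_pi [CompleteSpace R] (hF : ∀ i, Summable fun m => ‖F i m‖) :
    ∑' ν : Fin N → κ, ∏ i, F i (ν i) = ∏ i, ∑' m, F i m := by
  induction N with
  | zero => simp [tsum_fintype]
  | succ N ih =>
    have hF' := fun i : Fin N => hF i.succ
    rw [← (Fin.consEquiv fun _ => κ).tsum_eq, Fin.prod_univ_succ, ← ih hF',
      tsum_mul_tsum_of_summable_norm (hF 0) (summable_norm_prod_pi hF')]
    simp [Fin.consEquiv, Fin.prod_univ_succ]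

end MultipleSum

section ConstantTerm

open Real (circleAverage)

lemma circleAverage_zpow_mul {r : ℝ} (hr : r ≠ 0) (m : ℤ) (c : ℂ) :
    circleAverage (fun w : ℂ => w ^ m * c) 0 r = if m = 0 then c else 0 := by
  rcases eq_or_ne m 0 with rfl | hm
  · simp [Real.circleAverage_const]
  · have hint : (∮ w in C(0, r), (w - 0)⁻¹ • (w ^ m * c)) =
        ∮ w in C(0, r), c • (w - 0) ^ (m - 1) := by
      refine intervalIntegral.integral_congr fun φ _ => ?_
      have hφ : circleMap 0 r φ ≠ 0 := circleMap_ne_center hr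
      simp only [sub_zero, smul_eq_mul, zpow_sub_one₀ hφ]
      ring
    rw [Real.circleAverage_eq_circleIntegral hr, if_neg hm, hint, circleIntegral.integral_smul,
      circleIntegral.integral_sub_zpow_of_ne (by omega), smul_zero, smul_zero]

lemma tsum_constantTerm_eq_circleAverage {ι : Type*} [Countable ι] (s : ι → ℤ) (c : ι → ℂ)
    {r : ℝ} (hr : 0 < r) (hsum : Summable fun i => r ^ s i * ‖c i‖) :
    ∑' i, (if s i = 0 then c i else 0) =
      circleAverage (fun w => ∑' i, w ^ s i * c i) 0 r := by
  have hnorm (i : ι) (φ : ℝ) : ‖circleMap 0 r φ ^ s i * c i‖ = r ^ s i * ‖c i‖ := by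
    rw [norm_mul, norm_zpow, norm_circleMap_zero, abs_of_pos hr]
  have hcont (i : ι) : Continuous fun φ => circleMap 0 r φ ^ s i * c i :=
    ((continuous_circleMap 0 r).zpow₀ _ fun _ =>
      Or.inl (circleMap_ne_center hr.ne')).mul continuous_const
  have hintegral := intervalIntegral.hasSum_integral_of_dominated_convergence
    (a := 0) (b := 2 * Real.pi) (μ := MeasureTheory.volume)
    (F := fun i φ => circleMap 0 r φ ^ s i * c i)
    (f := fun φ => ∑' i, circleMap 0 r φ ^ s i * c i) (fun i _ => r ^ s i * ‖c i‖)
    (fun i => (hcont i).aestronglyMeasurable)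
    (fun i => .of_forall fun φ _ => (hnorm i φ).le)
    (.of_forall fun _ _ => hsum) intervalIntegrable_const
    (.of_forall fun φ _ => (Summable.of_norm (hsum.congr fun i => (hnorm i φ).symm)).hasSum)
  rw [Real.circleAverage_def, ← (hintegral.const_smul _).tsum_eq]
  exact tsum_congr fun i => (circleAverage_zpow_mul hr.ne' (s i) (c i)).symm

end ConstantTerm

section Proportionality

open Real (circleAverage)

variable {q w : ℂ} {N : ℕ} {a b x y : Fin N → ℂ}

/-- The determinant with rows `(latTerm k (x_i) (ν_i))_k`: up to the factor `bigTheta q x`, the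
summand of the multiple sum at the lattice point `(x_i q^{ν_i})_i`. -/
noncomputable def latDet (q : ℂ) (a b x : Fin N → ℂ) (ν : Fin N → ℤ) : ℂ :=
  (Matrix.of fun i k : Fin N => latTerm q a b k (x i) (ν i)).det

lemma zpow_sum_mul_latDet (hw : w ≠ 0) (x : Fin N → ℂ) (ν : Fin N → ℤ) :
    w ^ (∑ i, ν i) * latDet q a b x ν = ∑ σ : Equiv.Perm (Fin N),
      ((Equiv.Perm.sign σ : ℤ) : ℂ) * ∏ i, (w ^ ν i * latTerm q a b (σ i) (x i) (ν i)) := by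
  rw [latDet, ← Matrix.det_transpose, Matrix.det_apply', mul_sum]
  refine sum_congr rfl fun σ _ => ?_
  rw [prod_mul_distrib, prod_zpow_eq_zpow_sum hw]
  simp only [Matrix.transpose_apply, Matrix.of_apply]
  ring

lemma hasSum_zpow_sum_mul_latDet (hq0 : q ≠ 0) (hq : ‖q‖ < 1) (hwb : ‖w‖ < ‖∏ i, b i‖)
    (hwa : ‖q‖ < ‖w‖ * ‖∏ i, a i‖) (hx : ∀ i, x i ≠ 0) :
    HasSum (fun ν : Fin N → ℤ => w ^ (∑ i, ν i) * latDet q a b x ν)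
      (ptDet (fun k : Fin N => latSum q a b w k) x) := by
  have hw : w ≠ 0 := fun h => by simp [h, (norm_nonneg q).not_gt] at hwa
  simp only [zpow_sum_mul_latDet hw, ptDet, ← Matrix.det_transpose (Matrix.of _),
    Matrix.det_apply', Matrix.transpose_apply, Matrix.of_apply, latSum]
  refine hasSum_sum fun σ _ => HasSum.mul_left _ ?_
  have hterm (i : Fin N) := summable_norm_zpow_mul_latTerm hq0 hq hwb hwa (σ i).isLt (hx i)
  rw [← tsum_prod_pi hterm]
  exact (summable_norm_prod_pi hterm).of_norm.hasSum

lemma tsum_latDet_eq_circleAverage (hq0 : q ≠ 0) (hq : ‖q‖ < 1) {r : ℝ} (hr : 0 < r)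
    (hrb : r < ‖∏ i, b i‖) (hra : ‖q‖ < r * ‖∏ i, a i‖) (hx : ∀ i, x i ≠ 0) :
    ∑' ν : Fin N → ℤ, (if ∑ i, ν i = 0 then latDet q a b x ν else 0) =
      circleAverage (fun w => ptDet (fun k : Fin N => latSum q a b w k) x) 0 r := by
  have hsum {w : ℂ} (hw : ‖w‖ = r) :=
    hasSum_zpow_sum_mul_latDet hq0 hq (hw.symm ▸ hrb) (hw.symm ▸ hra) hx
  have hr_norm : ‖(r : ℂ)‖ = r := by rw [Complex.norm_real, Real.norm_of_nonneg hr.le]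
  rw [tsum_constantTerm_eq_circleAverage _ _ hr
    ((hsum hr_norm).summable.norm.congr fun ν => by rw [norm_mul, norm_zpow, hr_norm])]
  refine Real.circleAverage_congr_sphere fun w hw => (hsum ?_).tsum_eq
  rwa [mem_sphere_zero_iff_norm, abs_of_pos hr] at hw

lemma exists_radius_qtheta_ne_zero (hq0 : q ≠ 0) (hq : ‖q‖ < 1) {A B : ℝ}
    (hAB : A < B) {c : ℂ} (hc : c ≠ 0) :
    ∃ r, A < r ∧ r < B ∧ ∀ w : ℂ, w ≠ 0 → ‖w‖ = r → qtheta q (w * c) ≠ 0 := by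
  obtain ⟨r, hr, hAr, hrB⟩ := ((Set.countable_range
    fun m : ℤ => ‖q‖ ^ m / ‖c‖).dense_compl ℝ).exists_between hAB
  refine ⟨r, hAr, hrB, fun w hw0 hw h => hr ?_⟩
  obtain ⟨m, hm⟩ := (qtheta_eq_zero_iff hq0 hq (mul_ne_zero hw0 hc)).1 h
  exact ⟨m, by rw [← hw, div_eq_iff (norm_ne_zero_iff.2 hc), ← norm_mul, hm, norm_zpow]⟩

lemma tsum_latDet_mul_bigTheta (hq0 : q ≠ 0) (hq : ‖q‖ < 1)
    (hbal : ‖q‖ < ‖(∏ i, a i) * ∏ i, b i‖) (hx : ∀ i, x i ≠ 0) (hy : ∀ i, y i ≠ 0)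
    (hxθ : bigTheta q x ≠ 0) (hyθ : bigTheta q y ≠ 0) (hxy : ∏ i, x i = ∏ i, y i) :
    (∑' ν : Fin N → ℤ, if ∑ i, ν i = 0 then latDet q a b x ν else 0) * bigTheta q y =
      (∑' ν : Fin N → ℤ, if ∑ i, ν i = 0 then latDet q a b y ν else 0) * bigTheta q x := by
  have hA : 0 < ‖∏ i, a i‖ := by
    refine norm_pos_iff.2 fun h => ?_
    simp [h, (norm_nonneg q).not_gt] at hbal
  rw [norm_mul, mul_comm, ← div_lt_iff₀ hA] at hbal
  obtain ⟨r, hqr, hrb, hθ⟩ := exists_radius_qtheta_ne_zero hq0 hq hbal (prod_neg_ne_zero hx)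
  have hr : 0 < r := (by positivity : 0 ≤ ‖q‖ / ‖∏ i, a i‖).trans_lt hqr
  rw [div_lt_iff₀ hA] at hqr
  rw [tsum_latDet_eq_circleAverage hq0 hq hr hrb hqr hx,
    tsum_latDet_eq_circleAverage hq0 hq hr hrb hqr hy, mul_comm, mul_comm _ (bigTheta q x),
    ← smul_eq_mul, ← smul_eq_mul, ← Real.circleAverage_fun_smul, ← Real.circleAverage_fun_smul]
  refine Real.circleAverage_congr_sphere fun w hw => ?_
  rw [mem_sphere_zero_iff_norm, abs_of_pos hr] at hw
  have hw0 : w ≠ 0 := norm_pos_iff.1 (hw ▸ hr)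
  have hmem (k : Fin N) : latSum q a b w k ∈ thetaSpace q w⁻¹ N :=
    latSum_mem_thetaSpace hq0 hq (hw.symm ▸ hrb) (hw.symm ▸ hqr) k.isLt
  simpa only [smul_eq_mul, mul_comm] using
    ptDet_mul_bigTheta hq0 hq hw0 hmem hx hy hxθ hyθ hxy (hθ w hw0 hw)

end Proportionality

/-! ### The Gustafson sum as a constant term -/

section Gustafson

variable {q d : ℂ} {n : ℕ} {x y : Fin n → ℂ}

/-- The base point completed by the coordinate `d / ∏ x_k`. -/
noncomputable def fullPt (d : ℂ) (x : Fin n → ℂ) : Fin (n + 1) → ℂ :=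
  Fin.snoc x (d * (∏ k, x k)⁻¹)

/-- The exponent vector completed so that its entries sum to zero. -/
def fullExp (ν : Fin n → ℤ) : Fin (n + 1) → ℤ := Fin.snoc ν (-∑ k, ν k)

lemma prod_fullPt (hx : ∀ i, x i ≠ 0) : ∏ i, fullPt d x i = d := by
  have hprod : ∏ k, x k ≠ 0 := prod_ne_zero_iff.2 fun i _ => hx i
  simp only [Fin.prod_univ_castSucc, fullPt, Fin.snoc_castSucc, Fin.snoc_last]
  field_simp

lemma fullPt_ne_zero (hd : d ≠ 0) (hx : ∀ i, x i ≠ 0) (i : Fin (n + 1)) : fullPt d x i ≠ 0 :=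
  prod_ne_zero_iff.1 ((prod_fullPt hx).symm ▸ hd) i (mem_univ i)

lemma sum_fullExp (ν : Fin n → ℤ) : ∑ i, fullExp ν i = 0 := by
  simp [Fin.sum_univ_castSucc, fullExp]

lemma fullExp_injective : Function.Injective (fullExp (n := n)) := fun ν μ h => by
  simpa [fullExp] using congrArg Fin.init h

lemma exists_fullExp_eq {ν : Fin (n + 1) → ℤ} (hν : ∑ i, ν i = 0) : ∃ μ, fullExp μ = ν := by
  refine ⟨Fin.init ν, ?_⟩
  rw [Fin.sum_univ_castSucc, ← neg_eq_iff_add_eq_zero] at hν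
  rw [fullExp, show -∑ k, Fin.init ν k = ν (Fin.last n) from hν, Fin.snoc_init_self]

lemma gz_eq_fullPt_mul_zpow (hq0 : q ≠ 0) (x : Fin n → ℂ) (ν : Fin n → ℤ) :
    gz q d x ν = fun i => fullPt d x i * q ^ fullExp ν i := by
  ext i
  cases i using Fin.lastCases with
  | last =>
    simp only [gz, fullPt, fullExp, Fin.snoc_last]
    rw [prod_mul_distrib, prod_zpow_eq_zpow_sum hq0, zpow_neg, mul_inv, mul_assoc]
  | cast i => simp only [gz, fullPt, fullExp, Fin.snoc_castSucc]

lemma bigTheta_fullPt_ne_zero (hq0 : q ≠ 0) (hq : ‖q‖ < 1) (hd : d ≠ 0) (hx : ∀ i, x i ≠ 0)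
    (hxx : ∀ i j, i < j → ∀ m : ℤ, x i / x j ≠ q ^ m)
    (hxd : ∀ i, ∀ m : ℤ, x i * (∏ k, x k) * d⁻¹ ≠ q ^ m) : bigTheta q (fullPt d x) ≠ 0 := by
  have hX := fullPt_ne_zero hd hx
  refine (bigTheta_ne_zero_iff hX).2 fun i j hij h => ?_
  obtain ⟨m, hm⟩ := (qtheta_eq_zero_iff hq0 hq (div_ne_zero (hX i) (hX j))).1 h
  cases i using Fin.lastCases with
  | last => exact (Fin.le_last j).not_gt hij
  | cast i =>
    cases j using Fin.lastCases with
    | last =>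
      refine hxd i m ?_
      simpa [fullPt, div_eq_mul_inv, mul_assoc, mul_comm, mul_left_comm] using hm
    | cast j =>
      exact hxx i j (Fin.castSucc_lt_castSucc_iff.1 hij) m (by simpa [fullPt] using hm)

lemma bigTheta_eq_det_vandermonde_mul {N : ℕ} (hq : ‖q‖ < 1) {z : Fin N → ℂ}
    (hz : ∀ i, z i ≠ 0) :
    bigTheta q z = (Matrix.vandermonde z).det *
      ∏ i, ∏ j ∈ Ioi i, qp q (q * z i / z j) * qp q (q * z j / z i) := by
  simp only [Matrix.det_vandermonde, bigTheta, ← prod_mul_distrib]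
  refine prod_congr rfl fun i _ => prod_congr rfl fun j _ => ?_
  rw [qtheta_eq_one_sub_mul hq, ← mul_div_assoc, div_div_eq_mul_div, ← mul_assoc, mul_one_sub,
    mul_div_cancel₀ _ (hz j)]

lemma latDet_eq_prod_mul_det_vandermonde {N : ℕ} (q : ℂ) (a b x : Fin N → ℂ) (ν : Fin N → ℤ) :
    latDet q a b x ν = (∏ i, gaussian q (x i) (ν i) ^ N) *
      (∏ i, weight q a b (x i * q ^ ν i)) *
        (Matrix.vandermonde fun i => x i * q ^ ν i).det := by
  rw [← prod_mul_distrib, ← Matrix.det_mul_column, latDet]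
  congr 1
  ext i k
  simp only [Matrix.of_apply, Matrix.vandermonde_apply, latTerm, mul_assoc]

lemma gRegTerm_eq_latDet_div_bigTheta (hq0 : q ≠ 0) (hq : ‖q‖ < 1) (a b : Fin (n + 1) → ℂ)
    (hX : ∀ i, fullPt d x i ≠ 0) (hθ : bigTheta q (fullPt d x) ≠ 0) (ν : Fin n → ℤ) :
    gRegTerm q d a b x ν = latDet q a b (fullPt d x) (fullExp ν) / bigTheta q (fullPt d x) := by
  set z : Fin (n + 1) → ℂ := fun i => fullPt d x i * q ^ fullExp ν i with hz
  have hz0 (i) : z i ≠ 0 := mul_ne_zero (hX i) (zpow_ne_zero _ hq0)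
  have hshift : bigTheta q z * ∏ i, gaussian q (fullPt d x i) (fullExp ν i) ^ (n + 1) =
      bigTheta q (fullPt d x) := by
    rw [bigTheta_shift hq0 hq hX, sum_fullExp, gaussian_zero, mul_one]
  rw [bigTheta_eq_det_vandermonde_mul hq hz0] at hshift
  have hdenom : ∏ i, ∏ j ∈ Ioi i, qp q (q * z i / z j) * qp q (q * z j / z i) ≠ 0 := fun h => by
    simp [← hshift, h] at hθ
  rw [gRegTerm, gz_eq_fullPt_mul_zpow hq0, div_eq_div_iff hdenom hθ,
    latDet_eq_prod_mul_det_vandermonde, ← hshift]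
  simp only [weight, hz]
  ring

lemma tsum_gRegTerm (hq0 : q ≠ 0) (hq : ‖q‖ < 1) (a b : Fin (n + 1) → ℂ)
    (hX : ∀ i, fullPt d x i ≠ 0) (hθ : bigTheta q (fullPt d x) ≠ 0) :
    ∑' ν, gRegTerm q d a b x ν =
      (∑' ν : Fin (n + 1) → ℤ, if ∑ i, ν i = 0 then latDet q a b (fullPt d x) ν else 0) /
        bigTheta q (fullPt d x) := by
  rw [tsum_congr (gRegTerm_eq_latDet_div_bigTheta hq0 hq a b hX hθ), tsum_div_const,
    ← fullExp_injective.tsum_eq fun ν hν => exists_fullExp_eq (of_not_not fun h => hν (if_neg h))]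
  simp only [sum_fullExp, if_true]

theorem gustafson_reg_constant_general (hq0 : q ≠ 0) (hq : ‖q‖ < 1) {a b : Fin (n + 1) → ℂ}
    (hd : d ≠ 0) (hbal : ‖q‖ < ‖(∏ i, a i) * ∏ i, b i‖)
    (hx : ∀ i, x i ≠ 0) (hy : ∀ i, y i ≠ 0)
    (hxx : ∀ i j, i < j → ∀ m : ℤ, x i / x j ≠ q ^ m)
    (hxd : ∀ i, ∀ m : ℤ, x i * (∏ k, x k) * d⁻¹ ≠ q ^ m)
    (hyy : ∀ i j, i < j → ∀ m : ℤ, y i / y j ≠ q ^ m)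
    (hyd : ∀ i, ∀ m : ℤ, y i * (∏ k, y k) * d⁻¹ ≠ q ^ m) :
    gReg q d a b x = gReg q d a b y := by
  have hX := fullPt_ne_zero hd hx
  have hY := fullPt_ne_zero hd hy
  have hXθ := bigTheta_fullPt_ne_zero hq0 hq hd hx hxx hxd
  have hYθ := bigTheta_fullPt_ne_zero hq0 hq hd hy hyy hyd
  have hXY : ∏ i, fullPt d x i = ∏ i, fullPt d y i := by rw [prod_fullPt hx, prod_fullPt hy]
  rw [gReg, gReg, tsum_gRegTerm hq0 hq a b hX hXθ, tsum_gRegTerm hq0 hq a b hY hYθ,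
    (div_eq_div_iff hXθ hYθ).2 (tsum_latDet_mul_bigTheta hq0 hq hbal hX hY hXθ hYθ hXY)]

end Gustafson

/-- The regularized Gustafson sum is independent of the base point (Lemma 5.1). -/
theorem gustafson_reg_constant
    (q : ℝ) (hq0 : 0 < q) (hq1 : q < 1) (n : ℕ) (hn : 1 ≤ n)
    (a b : Fin (n + 1) → ℂ) (ha : ∀ i, a i ≠ 0) (hb : ∀ i, b i ≠ 0)
    (d : ℂ) (hd : d ≠ 0)
    (hbal : (q : ℝ) < ‖(∏ i, a i) * ∏ i, b i‖)
    (x y : Fin n → ℂ) (hx : ∀ i, x i ≠ 0) (hy : ∀ i, y i ≠ 0)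
    (hxx : ∀ i j, i < j → ∀ m : ℤ, x i / x j ≠ (q : ℂ) ^ m)
    (hxd : ∀ i, ∀ m : ℤ, x i * (∏ k, x k) * d⁻¹ ≠ (q : ℂ) ^ m)
    (hyy : ∀ i j, i < j → ∀ m : ℤ, y i / y j ≠ (q : ℂ) ^ m)
    (hyd : ∀ i, ∀ m : ℤ, y i * (∏ k, y k) * d⁻¹ ≠ (q : ℂ) ^ m) :
    gReg (q : ℂ) d a b x = gReg (q : ℂ) d a b y :=
  gustafson_reg_constant_general (Complex.ofReal_ne_zero.2 hq0.ne')
    (by simpa [abs_of_pos hq0] using hq1) hd (by simpa [abs_of_pos hq0] using hbal)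
    hx hy hxx hxd hyy hyd
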